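/- VC-dimension lower bound for d = 1, ℓ = 2: for every integer t ≥ 1 there exist an integer m with m ≤ (t+2)·2^t, a polygonal curve P : [0,1] → ℝ with breakpoint parameters 0 = t_1 < t_2 < … < t_m = 1, and t polygonal curves Q_1,…,Q_t ∈ X^1_2 (line segments in ℝ) such that the set {Q_1,…,Q_t} is shattered by the dual sets r_z with Δ = 1/3: for every subset T ⊆ {1,…,t} there exists z ∈ {1,…,m−1} with T = { s : Q_s ∈ r_z }. Hence the VC-dimension of the dual set system R* is at least t, which is in Ω(log m). -/

import Mathlib

/-! The segments are `Q s`, running from `0` to `s + 1` on the line. For every subset `T` of the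
indices the curve `P` has a block of `tn + 2` vertices: the separator `-1`, the start `0`, and then
for each `k < tn` the vertex `k + 1` if `k ∈ T` and `k + 1/2` otherwise. The edge leaving `0` in the
block of `T` realizes `T`.

* If `s ∈ T`, the piece of the block from `0` to `s + 1` is monotone, hence within `1/3` of `Q s`
  (`frechetDist_le_of_monotone`).
* If some subcurve through that edge is within `1/3` of `Q s`, then it contains no separator, as
  `-1` is at distance at least `1` from every point of `Q s`. So it ends at a vertex of the same
  block, and that vertex is at distance less than `1/2` from `s + 1`
  (`exists_reparam_of_frechetDist_le`); the only such vertex is `s + 1` itself, which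
  is present only if `s ∈ T`.

To handle continuity and monotonicity, `polyline` is rewritten as a sum of clamped ramps
(`ramp`, `polyline_eq_ramp`). -/

open Set

noncomputable section

/-- Points in `ℝ^d`. -/
abbrev Pt (d : ℕ) : Type := EuclideanSpace ℝ (Fin d)

/-- A reparametrization: a continuous strictly increasing bijection of `[0,1]` onto itself. -/
def IsReparam (γ : ℝ → ℝ) : Prop :=
  ContinuousOn γ (Icc 0 1) ∧ StrictMonoOn γ (Icc 0 1) ∧ γ '' Icc 0 1 = Icc 0 1

/-- The Fréchet distance `d_F(P,Q) = inf_γ sup_{t ∈ [0,1]} ‖P(γ(t)) - Q(t)‖`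
(only the values of the curves on `[0,1]` are relevant). -/
def frechetDist {d : ℕ} (P Q : ℝ → Pt d) : ℝ :=
  ⨅ γ : {γ : ℝ → ℝ // IsReparam γ}, ⨆ s : Icc (0:ℝ) 1, ‖P (γ.1 s.1) - Q s.1‖

/-- The linearly parametrized line segment from `a` to `b`. -/
def seg {d : ℕ} (a b : Pt d) : ℝ → Pt d := fun s => (1 - s) • a + s • b

/-- The subcurve `P[a,b]` of `P`, linearly reparametrized over `[0,1]`. -/
def subcurve {d : ℕ} (P : ℝ → Pt d) (a b : ℝ) : ℝ → Pt d := fun s => P (a + s * (b - a))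

/-- The polygonal curve with vertex sequence `pts 0, …, pts n`, uniformly
parametrized over `[0,1]`. -/
def polyline {d n : ℕ} (pts : Fin (n + 1) → Pt d) : ℝ → Pt d := fun s =>
  if h : n = 0 then pts 0
  else
    let i : ℕ := min ⌊s * n⌋₊ (n - 1)
    have hi : i < n := lt_of_le_of_lt (min_le_right _ _) (by omega)
    (1 - (s * n - i)) • pts ⟨i, hi.trans n.lt_succ_self⟩ +
      (s * n - i) • pts ⟨i + 1, Nat.succ_lt_succ hi⟩

/-- `f ∈ 𝕏^d_ℓ`: `f` is a polygonal curve with at most `ℓ` vertices. -/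
def IsPolygonal {d : ℕ} (f : ℝ → Pt d) (ℓ : ℕ) : Prop :=
  ∃ n : ℕ, n + 1 ≤ ℓ ∧ ∃ pts : Fin (n + 1) → Pt d, f = polyline pts

/-- Concatenation of two curves (each parametrized over `[0,1]`). -/
def concat {d : ℕ} (f g : ℝ → Pt d) : ℝ → Pt d := fun s =>
  if s ≤ 1 / 2 then f (2 * s) else g (2 * s - 1)

/-- `CostLE P m t C Δ` states that the clustering cost satisfies `φ(P,C) ≤ Δ`:
there is a family `I` of index pairs `(i,j)`, `1 ≤ i < j ≤ m`, with
`⋃_{(i,j) ∈ I} [t i, t j] = [0,1]`, such that every corresponding subcurve is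
within Fréchet distance `Δ` of some center in `C`. -/
def CostLE {d : ℕ} (P : ℝ → Pt d) (m : ℕ) (t : ℕ → ℝ) (C : Set (ℝ → Pt d)) (Δ : ℝ) : Prop :=
  ∃ I : Set (ℕ × ℕ),
    (∀ q ∈ I, 1 ≤ q.1 ∧ q.1 < q.2 ∧ q.2 ≤ m) ∧
    (⋃ q ∈ I, Icc (t q.1) (t q.2)) = Icc (0:ℝ) 1 ∧
    ∀ q ∈ I, ∃ c ∈ C, frechetDist (subcurve P (t q.1) (t q.2)) c ≤ Δ

/-- The set `r_Q` of the set system `R` (ground set `{1,…,m−1}`):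
`r_Q = {z : ∃ i ≤ z < j, d_F(Q, P[t_i,t_j]) ≤ Δ}`. -/
def rSet {d : ℕ} (P : ℝ → Pt d) (m : ℕ) (t : ℕ → ℝ) (Δ : ℝ) (Q : ℝ → Pt d) : Set ℕ :=
  {z | 1 ≤ z ∧ z < m ∧ ∃ i j, 1 ≤ i ∧ i ≤ z ∧ z < j ∧ j ≤ m ∧
    frechetDist Q (subcurve P (t i) (t j)) ≤ Δ}

/-! ### Piecewise linear interpolation as a sum of ramps -/

/-- The piecewise linear interpolation of `x 0, …, x n` at the nodes `0, …, n`, written as a sum of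
ramps, each non-constant on one edge only; it is constant outside `[0, n]`. -/
def ramp (x : ℕ → ℝ) (n : ℕ) (y : ℝ) : ℝ :=
  x 0 + ∑ k ∈ Finset.range n, (x (k + 1) - x k) * max 0 (min 1 (y - k))

lemma ramp_of_le (x : ℕ → ℝ) (n : ℕ) (y : ℝ) (h : (n : ℝ) ≤ y) : ramp x n y = x n := by
  induction n with
  | zero => simp [ramp]
  | succ n ih =>
    push_cast at h
    have h1 := ih (by linarith)
    unfold ramp at h1 ⊢
    rw [Finset.sum_range_succ, ← add_assoc, h1, min_eq_left (by linarith),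
      max_eq_right zero_le_one]
    ring

lemma ramp_cell (x : ℕ → ℝ) (n i : ℕ) (y : ℝ) (hi : i < n) (h1 : (i : ℝ) ≤ y) (h2 : y ≤ i + 1) :
    ramp x n y = x i + (y - i) * (x (i + 1) - x i) := by
  induction n, hi using Nat.le_induction with
  | base =>
    have h := ramp_of_le x i y h1
    unfold ramp at h ⊢
    rw [Nat.succ_eq_add_one, Finset.sum_range_succ, ← add_assoc, h, min_eq_right (by linarith),
      max_eq_right (by linarith)]
    ring
  | succ n hn ih =>
    have h3 : (i : ℝ) + 1 ≤ n := by exact_mod_cast hn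
    unfold ramp at ih ⊢
    rw [Finset.sum_range_succ, ← add_assoc, ih, min_eq_right (by linarith),
      max_eq_left (by linarith)]
    ring

lemma ramp_node (x : ℕ → ℝ) (n g : ℕ) (hg : g ≤ n) : ramp x n g = x g := by
  rcases hg.lt_or_eq with h | rfl
  · rw [ramp_cell x n g g h le_rfl (by linarith)]; ring
  · exact ramp_of_le _ _ _ le_rfl

lemma ramp_continuous (x : ℕ → ℝ) (n : ℕ) : Continuous (ramp x n) := by
  unfold ramp; fun_prop

/-- Only the increments along the edges between the nodes `a` and `b` matter on `[a, b]`, since the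
other ramps are constant there. -/
lemma ramp_monotoneOn (x : ℕ → ℝ) (n a b : ℕ) (hx : ∀ k, a ≤ k → k < b → x k ≤ x (k + 1)) :
    MonotoneOn (ramp x n) (Icc (a : ℝ) b) := by
  intro y hy y' hy' hyy
  unfold ramp
  refine add_le_add le_rfl (Finset.sum_le_sum fun k _ => ?_)
  rcases lt_or_ge k a with h | h
  · have h3 : (k : ℝ) + 1 ≤ a := by exact_mod_cast h
    rw [min_eq_left (by linarith [hy.1]), min_eq_left (by linarith [hy'.1])]
  rcases lt_or_ge k b with h' | h'
  · have := hx k h h'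
    exact mul_le_mul_of_nonneg_left (by gcongr) (by linarith)
  · have h3 : (b : ℝ) ≤ k := by exact_mod_cast h'
    rw [min_eq_right (by linarith [hy.2]), min_eq_right (by linarith [hy'.2]),
      max_eq_left (by linarith [hy.2]), max_eq_left (by linarith [hy'.2])]

lemma polyline_eq_ramp (x : ℕ → ℝ) (n : ℕ) (hn : 0 < n) (s : ℝ) (hs : s ∈ Icc (0 : ℝ) 1) :
    polyline (fun g : Fin (n + 1) => (!₂[x g] : Pt 1)) s 0 = ramp x n (s * n) := by
  have hn' : (1 : ℝ) ≤ n := by exact_mod_cast hn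
  have hy0 : 0 ≤ s * n := mul_nonneg hs.1 (by linarith)
  have hyn : s * n ≤ n := by nlinarith [hs.2]
  have hi : min ⌊s * n⌋₊ (n - 1) < n := by omega
  rw [ramp_cell x n (min ⌊s * n⌋₊ (n - 1)) (s * n) hi]
  · simp [polyline, hn.ne']
    ring
  · exact le_trans (by exact_mod_cast min_le_left _ _) (Nat.floor_le hy0)
  · rcases min_choice ⌊s * n⌋₊ (n - 1) with h | h <;> rw [h]
    · exact (Nat.lt_floor_add_one _).le
    · rw [Nat.cast_sub hn]; push_cast; linarith

/-! ### Fréchet distance on the line -/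

lemma norm_pt_one (w : Pt 1) : ‖w‖ = |w 0| := by
  simp [EuclideanSpace.norm_eq, Real.sqrt_sq_eq_abs]

/-- The segment from `0` to `c` on the line. -/
def lineQ (c : ℝ) : ℝ → Pt 1 := polyline (n := 1) ![!₂[0], !₂[c]]

lemma lineQ_apply (c u : ℝ) : lineQ c u 0 = u * c := by
  simp [lineQ, polyline]

lemma IsReparam.zero_one {γ : ℝ → ℝ} (h : IsReparam γ) : γ 0 = 0 ∧ γ 1 = 1 := by
  obtain ⟨-, hm, hi⟩ := h
  have m0 : (0 : ℝ) ∈ Icc (0 : ℝ) 1 := by simp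
  have m1 : (1 : ℝ) ∈ Icc (0 : ℝ) 1 := by simp
  have g0 : γ 0 ∈ Icc (0 : ℝ) 1 := hi ▸ mem_image_of_mem γ m0
  have g1 : γ 1 ∈ Icc (0 : ℝ) 1 := hi ▸ mem_image_of_mem γ m1
  obtain ⟨a, ha, ha'⟩ : (0 : ℝ) ∈ γ '' Icc 0 1 := hi.symm ▸ m0
  obtain ⟨b, hb, hb'⟩ : (1 : ℝ) ∈ γ '' Icc 0 1 := hi.symm ▸ m1
  have h1 := hm.monotoneOn m0 ha ha.1
  have h2 := hm.monotoneOn hb m1 hb.2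
  exact ⟨by linarith [g0.1], by linarith [g1.2]⟩

lemma isReparam_id : IsReparam id :=
  ⟨continuousOn_id, strictMono_id.strictMonoOn _, by simp⟩

/-- Continuity of `R` makes the suprema in `frechetDist` finite, so that they do bound the pointwise
distances. -/
lemma exists_reparam_of_frechetDist_le (c : ℝ) (R : ℝ → Pt 1)
    (hR : ContinuousOn (fun u => R u 0) (Icc 0 1)) (h : frechetDist (lineQ c) R ≤ 1 / 3) :
    ∃ γ, IsReparam γ ∧ ∀ u ∈ Icc (0 : ℝ) 1, |γ u * c - R u 0| < 1 / 2 := by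
  have : Nonempty {γ : ℝ → ℝ // IsReparam γ} := ⟨⟨id, isReparam_id⟩⟩
  obtain ⟨⟨γ, hγ⟩, hlt⟩ := exists_lt_of_ciInf_lt (lt_of_le_of_lt h (by norm_num : (1 / 3 : ℝ) < 1 / 2))
  refine ⟨γ, hγ, fun u hu => ?_⟩
  have heq : ∀ v, ‖lineQ c (γ v) - R v‖ = |γ v * c - R v 0| := fun v => by
    rw [norm_pt_one, PiLp.sub_apply, lineQ_apply]
  have hb : BddAbove (range fun s : Icc (0 : ℝ) 1 => ‖lineQ c (γ s.1) - R s.1‖) := by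
    have hc : ContinuousOn (fun v => |γ v * c - R v 0|) (Icc 0 1) :=
      ((hγ.1.mul continuousOn_const).sub hR).abs
    refine (isCompact_Icc.bddAbove_image hc).mono ?_
    rintro _ ⟨v, rfl⟩
    exact ⟨v.1, v.2, (heq _).symm⟩
  rw [← heq]
  exact lt_of_le_of_lt (le_ciSup hb ⟨u, hu⟩) hlt

/-- A plateau of `R` prevents `R / c` from being a reparametrization, so it is perturbed by a small
multiple of the identity; the factor `1 / (3c)` costs distance at most `1/3`. -/
lemma frechetDist_le_of_monotone (c : ℝ) (hc : 1 ≤ c) (R : ℝ → Pt 1)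
    (hR : ContinuousOn (fun u => R u 0) (Icc 0 1)) (hm : MonotoneOn (fun u => R u 0) (Icc 0 1))
    (h0 : R 0 0 = 0) (h1 : R 1 0 = c) : frechetDist (lineQ c) R ≤ 1 / 3 := by
  have m0 : (0 : ℝ) ∈ Icc (0 : ℝ) 1 := by simp
  have m1 : (1 : ℝ) ∈ Icc (0 : ℝ) 1 := by simp
  have hc0 : 0 < c := by linarith
  set e : ℝ := 1 / (3 * c) with he
  have he0 : 0 < e := by positivity
  have hec : e * c = 1 / 3 := by rw [he]; field_simp
  have he1 : e ≤ 1 := by nlinarith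
  set γ : ℝ → ℝ := fun u => (1 - e) / c * R u 0 + e * u with hγ
  have hco : ContinuousOn γ (Icc 0 1) := by
    rw [hγ]
    exact (continuousOn_const.mul hR).add (by fun_prop)
  have hst : StrictMonoOn γ (Icc 0 1) := by
    intro a ha b hb hab
    have h2 : R a 0 ≤ R b 0 := hm ha hb hab.le
    have h3 : (1 - e) / c * R a 0 ≤ (1 - e) / c * R b 0 :=
      mul_le_mul_of_nonneg_left h2 (div_nonneg (by linarith) hc0.le)
    have h4 : e * a < e * b := by gcongr
    simp only [hγ]
    linarith
  have g0 : γ 0 = 0 := by simp [hγ, h0]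
  have g1 : γ 1 = 1 := by simp only [hγ, h1]; field_simp; ring
  have hre : IsReparam γ := by
    refine ⟨hco, hst, Subset.antisymm ?_ ?_⟩
    · rintro _ ⟨u, hu, rfl⟩
      have a1 := hst.monotoneOn m0 hu hu.1
      have a2 := hst.monotoneOn hu m1 hu.2
      rw [g0] at a1
      rw [g1] at a2
      exact ⟨a1, a2⟩
    · have := intermediate_value_Icc zero_le_one hco
      rwa [g0, g1] at this
  have hbb : BddBelow (range fun γ : {γ : ℝ → ℝ // IsReparam γ} =>
      ⨆ s : Icc (0:ℝ) 1, ‖lineQ c (γ.1 s.1) - R s.1‖) := by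
    refine ⟨0, ?_⟩
    rintro _ ⟨δ, rfl⟩
    exact Real.iSup_nonneg fun _ => norm_nonneg _
  refine (ciInf_le hbb ⟨γ, hre⟩).trans ?_
  have : Nonempty (Icc (0 : ℝ) 1) := ⟨⟨0, m0⟩⟩
  refine ciSup_le fun u => ?_
  have a1 : R 0 0 ≤ R u.1 0 := hm m0 u.2 u.2.1
  have a2 : R u.1 0 ≤ R 1 0 := hm u.2 m1 u.2.2
  rw [h0] at a1
  rw [h1] at a2
  rw [norm_pt_one, PiLp.sub_apply, lineQ_apply]
  have : γ u.1 * c - R u.1 0 = e * (u.1 * c - R u.1 0) := by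
    simp only [hγ]; field_simp; ring
  rw [this, abs_mul, abs_of_pos he0, ← hec]
  gcongr
  rw [abs_le]
  constructor <;> nlinarith [u.2.1, u.2.2]

/-! ### The curve -/

open Classical in
/-- The `g`-th vertex of the curve (counted from `0`) when the blocks have length `N`; `S b k` says
that `k` belongs to the subset encoded by block `b`. -/
def vertex (N : ℕ) (S : ℕ → ℕ → Prop) (g : ℕ) : ℝ :=
  if g % N = 0 then -1 else if g % N = 1 then 0
  else if S (g / N) (g % N - 2) then (g % N : ℕ) - 1 else (g % N : ℕ) - 3 / 2

open Classical in
lemma vertex_block (N : ℕ) (S : ℕ → ℕ → Prop) (b r : ℕ) (hr : r < N) :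
    vertex N S (b * N + r) = if r = 0 then -1 else if r = 1 then 0
      else if S b (r - 2) then (r : ℝ) - 1 else (r : ℝ) - 3 / 2 := by
  have h1 : (b * N + r) % N = r := by
    rw [Nat.mul_add_mod_self_right, Nat.mod_eq_of_lt hr]
  have h2 : (b * N + r) / N = b := by
    rw [mul_comm, Nat.mul_add_div (by omega), Nat.div_eq_of_lt hr, add_zero]
  simp only [vertex, h1, h2]

lemma vertex_step (N : ℕ) (S : ℕ → ℕ → Prop) (b r : ℕ) (h1 : 1 ≤ r) (hr : r + 1 < N) :
    vertex N S (b * N + r) ≤ vertex N S (b * N + r + 1) := by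
  rw [add_assoc, vertex_block _ _ _ _ hr, vertex_block _ _ _ _ (by omega)]
  have h1' : (1 : ℝ) ≤ r := by exact_mod_cast h1
  push_cast
  split_ifs <;> first | omega | linarith

/-- With breakpoints `(i - 1) / n`, the subcurve between breakpoints `i` and `j` interpolates the
vertices with (zero-based) indices `i - 1, …, j - 1`. -/
lemma subcurve_eq_ramp (x : ℕ → ℝ) (n : ℕ) (hn : 0 < n) (i j : ℕ) (hi : 1 ≤ i) (hij : i < j)
    (hj : j ≤ n + 1) (u : ℝ) (hu : u ∈ Icc (0 : ℝ) 1) :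
    subcurve (polyline (fun g : Fin (n + 1) => (!₂[x g] : Pt 1)))
      (((i : ℝ) - 1) / n) (((j : ℝ) - 1) / n) u 0 = ramp x n ((i - 1) + u * (j - i)) := by
  have hn' : (0 : ℝ) < n := by exact_mod_cast hn
  have hi' : (1 : ℝ) ≤ i := by exact_mod_cast hi
  have hij' : (i : ℝ) < j := by exact_mod_cast hij
  have hj' : (j : ℝ) ≤ n + 1 := by exact_mod_cast hj
  have key : ((i : ℝ) - 1) / n + u * (((j : ℝ) - 1) / n - ((i : ℝ) - 1) / n)
      = ((i - 1) + u * (j - i)) / n := by field_simp; ring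
  unfold subcurve
  rw [key, polyline_eq_ramp x n hn _ ⟨?_, ?_⟩, div_mul_cancel₀ _ hn'.ne']
  · apply div_nonneg _ hn'.le
    nlinarith [hu.1]
  · rw [div_le_one hn']
    nlinarith [hu.2]

/-- VC-dimension lower bound for `d = 1`, `ℓ = 2`: for every `tn ≥ 1`
there are `m ≤ (tn+2)·2^tn`, a polygonal curve `P : [0,1] → ℝ` with breakpoints
`0 = tb 1 < … < tb m = 1`, and `tn` distinct line segments `Q 0, …` in `𝕏¹₂` that are
shattered by the dual sets `r_z` with `Δ = 1/3`. -/
theorem stmt18 (tn : ℕ) (htn : 1 ≤ tn) :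
    ∃ (m : ℕ) (P : ℝ → Pt 1) (tb : ℕ → ℝ) (Q : Fin tn → ℝ → Pt 1),
      2 ≤ m ∧ m ≤ (tn + 2) * 2 ^ tn ∧
      (∃ nP : ℕ, IsPolygonal P nP) ∧
      tb 1 = 0 ∧ tb m = 1 ∧ (∀ i, 1 ≤ i → i < m → tb i < tb (i + 1)) ∧
      (∀ s, IsPolygonal (Q s) 2) ∧ Function.Injective Q ∧
      ∀ T : Set (Fin tn), ∃ z, 1 ≤ z ∧ z < m ∧
        ∀ s, s ∈ T ↔ ∃ i j, 1 ≤ i ∧ i ≤ z ∧ z < j ∧ j ≤ m ∧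
          frechetDist (Q s) (subcurve P (tb i) (tb j)) ≤ 1 / 3 := by
  classical
  -- a numbering of the subsets, in which block `e T` encodes `T`
  let e : Set (Fin tn) ≃ Fin (2 ^ tn) := Fintype.equivFinOfCardEq (by simp)
  let S : ℕ → ℕ → Prop := fun b k => ∃ T, (e T).val = b ∧ ∃ h : k < tn, (⟨k, h⟩ : Fin tn) ∈ T
  have hS : ∀ (T : Set (Fin tn)) (s : Fin tn), S (e T).val s.val ↔ s ∈ T := by
    intro T s
    constructor
    · rintro ⟨T', h1, h2, h3⟩
      have : T' = T := e.injective (Fin.ext h1)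
      exact this ▸ h3
    · intro h
      exact ⟨T, rfl, s.2, h⟩
  obtain ⟨N, hN⟩ : ∃ N, N = tn + 2 := ⟨_, rfl⟩
  obtain ⟨n, hn⟩ : ∃ n, n + 1 = N * 2 ^ tn :=
    ⟨N * 2 ^ tn - 1, Nat.sub_add_cancel (Nat.mul_pos (by omega) (by positivity))⟩
  have hnN : N ≤ n + 1 := hn ▸ Nat.le_mul_of_pos_right N (by positivity)
  have hn0 : 0 < n := by omega
  have hn0' : (0 : ℝ) < n := by exact_mod_cast hn0
  set x := vertex N S with hx
  have hcont : ∀ i j : ℕ, 1 ≤ i → i < j → j ≤ n + 1 → ContinuousOn (fun u =>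
      subcurve (polyline (fun g : Fin (n + 1) => (!₂[x g] : Pt 1)))
        (((i : ℝ) - 1) / n) (((j : ℝ) - 1) / n) u 0) (Icc 0 1) := by
    intro i j h1 h2 h3
    refine ContinuousOn.congr (f := fun u : ℝ => ramp x n ((i - 1) + u * (j - i))) ?_
      (fun u hu => subcurve_eq_ramp x n hn0 i j h1 h2 h3 u hu)
    exact ((ramp_continuous x n).comp (by fun_prop)).continuousOn
  refine ⟨n + 1, polyline (fun g : Fin (n + 1) => (!₂[x g] : Pt 1)), fun i => ((i : ℝ) - 1) / n,
    fun s => lineQ (s.val + 1), by omega, by rw [hn, hN], ⟨n + 1, n, le_rfl, _, rfl⟩, by simp, ?_,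
    ?_, fun s => ⟨1, le_rfl, _, rfl⟩, ?_, ?_⟩
  · push_cast
    rw [add_sub_cancel_right, div_self hn0'.ne']
  · intro i _ _
    push_cast
    gcongr
    linarith
  · intro s s' h
    have h1 := congrArg (fun f : ℝ → Pt 1 => f 1 0) h
    simp only [lineQ_apply] at h1
    apply Fin.ext
    have h2 : (s.val : ℝ) = s'.val := by linarith
    exact_mod_cast h2
  intro T
  set b := (e T).val with hb
  have hblock : b * N + N ≤ n + 1 := by
    have h1 : b + 1 ≤ 2 ^ tn := (e T).2
    calc b * N + N = N * (b + 1) := by ring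
      _ ≤ N * 2 ^ tn := Nat.mul_le_mul_left _ h1
      _ = n + 1 := hn.symm
  refine ⟨b * N + 2, by omega, by omega, fun s => ?_⟩
  have hs := s.2
  constructor
  · intro hsT
    -- the piece of block `b` from its vertex `0` to its vertex `s + 1`
    have hi : 1 ≤ b * N + 2 := by omega
    have hij : b * N + 2 < b * N + (s.val + 3) := by omega
    have hj : b * N + (s.val + 3) ≤ n + 1 := by omega
    have hsub := subcurve_eq_ramp x n hn0 _ _ hi hij hj
    refine ⟨b * N + 2, b * N + (s.val + 3), hi, le_rfl, hij, hj,
      frechetDist_le_of_monotone _ (by linarith [Nat.cast_nonneg (α := ℝ) s.val]) _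
        (hcont _ _ hi hij hj) ?_ ?_ ?_⟩
    · have hmono := ramp_monotoneOn x n (b * N + 1) (b * N + (s.val + 2)) (by
        intro k hk hk'
        obtain ⟨r, rfl⟩ := Nat.exists_eq_add_of_le (show b * N ≤ k by omega)
        exact vertex_step N S b r (by omega) (by omega))
      intro u hu v hv huv
      have hs0 : (0 : ℝ) ≤ s.val := Nat.cast_nonneg _
      simp only
      rw [hsub u hu, hsub v hv]
      refine hmono ?_ ?_ ?_
      · push_cast
        constructor <;> nlinarith [hu.1, hu.2]
      · push_cast
        constructor <;> nlinarith [hv.1, hv.2]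
      · push_cast
        nlinarith
    · rw [hsub 0 (by simp)]
      have h1 : ((b * N + 2 : ℕ) : ℝ) - 1 + 0 * (((b * N + (s.val + 3) : ℕ) : ℝ)
          - ((b * N + 2 : ℕ) : ℝ)) = ((b * N + 1 : ℕ) : ℝ) := by push_cast; ring
      rw [h1, ramp_node _ _ _ (by omega), hx, vertex_block _ _ _ _ (by omega)]
      simp
    · rw [hsub 1 (by simp)]
      have h1 : ((b * N + 2 : ℕ) : ℝ) - 1 + 1 * (((b * N + (s.val + 3) : ℕ) : ℝ)
          - ((b * N + 2 : ℕ) : ℝ)) = ((b * N + (s.val + 2) : ℕ) : ℝ) := by push_cast; ring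
      rw [h1, ramp_node _ _ _ (by omega), hx, vertex_block _ _ _ _ (by omega), if_neg (by omega),
        if_neg (by omega), Nat.add_sub_cancel, if_pos ((hS T s).2 hsT)]
      push_cast
      ring
  · rintro ⟨i, j, hi, hiz, hzj, hj, hd⟩
    have hij : i < j := by omega
    obtain ⟨γ, hγ, hclose⟩ := exists_reparam_of_frechetDist_le _ _ (hcont i j hi hij hj) hd
    have hsub := subcurve_eq_ramp x n hn0 i j hi hij hj
    have hij' : (i : ℝ) < j := by exact_mod_cast hij
    -- every vertex on the subcurve is close to a point of the segment
    have hvert : ∀ g : ℕ, i ≤ g + 1 → g + 1 ≤ j → ∃ u ∈ Icc (0 : ℝ) 1,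
        |γ u * (s.val + 1) - x g| < 1 / 2 := by
      intro g h1 h2
      have h1' : (i : ℝ) ≤ g + 1 := by exact_mod_cast h1
      have h2' : (g : ℝ) + 1 ≤ j := by exact_mod_cast h2
      have hu : ((g : ℝ) + 1 - i) / (j - i) ∈ Icc (0 : ℝ) 1 :=
        ⟨div_nonneg (by linarith) (by linarith), (div_le_one (by linarith)).2 (by linarith)⟩
      refine ⟨_, hu, ?_⟩
      have h3 := hclose _ hu
      rwa [hsub _ hu, div_mul_cancel₀ _ (by linarith),
        show (i : ℝ) - 1 + (g + 1 - i) = g by ring, ramp_node _ _ _ (by omega)] at h3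
    have hsep : ∀ c : ℕ, i ≤ c * N + 1 → c * N + 1 ≤ j → False := by
      intro c h1 h2
      obtain ⟨u, hu, h3⟩ := hvert (c * N) h1 h2
      have h4 : x (c * N) = -1 := by
        have := vertex_block N S c 0 (by omega)
        simpa using this
      have h5 : γ u ∈ Icc (0 : ℝ) 1 := hγ.2.2 ▸ mem_image_of_mem γ hu
      rw [h4, abs_lt] at h3
      have := mul_nonneg h5.1 (by positivity : (0 : ℝ) ≤ (s.val : ℝ) + 1)
      linarith [h3.2]
    have hi2 : b * N + 1 < i := by
      by_contra h
      exact hsep b (by omega) (by omega)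
    have hj2 : j < b * N + N + 1 := by
      by_contra h
      have h1 : (b + 1) * N = b * N + N := by ring
      exact hsep (b + 1) (by omega) (by omega)
    obtain ⟨r, rfl⟩ := Nat.exists_eq_add_of_le (show b * N + 3 ≤ j by omega)
    have h1 := hclose 1 (by simp)
    have h2 : (i : ℝ) - 1 + 1 * (((b * N + 3 + r : ℕ) : ℝ) - i) = ((b * N + (r + 2) : ℕ) : ℝ) := by
      push_cast; ring
    rw [hsub 1 (by simp), h2, ramp_node _ _ _ (by omega), hγ.zero_one.2, hx,
      vertex_block _ _ _ _ (by omega), if_neg (by omega), if_neg (by omega), abs_lt] at h1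
    have hrs : r = s.val ∧ S b r := by
      split_ifs at h1 with hT
      · push_cast at h1
        have a1 : (r : ℝ) < s.val + 1 := by linarith [h1.1]
        have a2 : (s.val : ℝ) < r + 1 := by linarith [h1.2]
        have a1' : r < s.val + 1 := by exact_mod_cast a1
        have a2' : s.val < r + 1 := by exact_mod_cast a2
        exact ⟨by omega, hT⟩
      · -- `|(s + 1) - (r + 1/2)| < 1/2` has no integer solutions
        push_cast at h1
        have a1 : (r : ℝ) < s.val + 1 := by linarith [h1.1]
        have a2 : (s.val : ℝ) < r := by linarith [h1.2]
        have a1' : r < s.val + 1 := by exact_mod_cast a1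
        have a2' : s.val < r := by exact_mod_cast a2
        omega
    obtain ⟨rfl, h⟩ := hrs
    exact (hS T s).1 h
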